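/- Let b ≥ 2 be an integer and E a nonempty set of base-b digits. Then K(b,E) = (b/#E)·log(b) − ∫_{[0,1)} (1/b)·Σ_{d∈F} (ψ(1) − ψ(1 − (d−x)/b)) dμ_{b,E}(x), where F = {b − a : a ∈ E1}. -/

import Mathlib

open MeasureTheory Real ENNReal

/-- The digamma function `ψ(x) = d/dx log Γ(x)`. -/
noncomputable def digamma (x : ℝ) : ℝ := deriv (fun y => Real.log (Real.Gamma y)) x

/-- The Kempner sum `K(b,E)`: sum of reciprocals of positive integers whose
base-`b` digits all avoid the excluded set `E`. -/
noncomputable def kempnerSum (b : ℕ) (E : Finset ℕ) : ℝ :=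
  ∑' n : ℕ, if n ≠ 0 ∧ ∀ d ∈ Nat.digits b n, d ∉ E then (n : ℝ)⁻¹ else 0

/-- The measure `μ_{b,E}` on `[0,1)`: the sum, over all finite strings of admissible
digits (digits `< b` not in `E`), of the weighted Dirac mass `b^{-l} δ_{n(X)/b^l}`. -/
noncomputable def kempnerMeasure (b : ℕ) (E : Finset ℕ) : Measure ℝ :=
  Measure.sum (fun X : {l : List ℕ // ∀ d ∈ l, d < b ∧ d ∉ E} =>
    ((b : ℝ≥0∞) ^ X.1.length)⁻¹ •
      Measure.dirac (((Nat.ofDigits b X.1 : ℕ) : ℝ) / (b : ℝ) ^ X.1.length))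

/-- `E₁ = E` if `0 ∉ E`, and `E₁ = (E ∪ {b}) \ {0}` if `0 ∈ E`. -/
def Eone (b : ℕ) (E : Finset ℕ) : Finset ℕ :=
  if 0 ∈ E then insert b (E.erase 0) else E

/-- `ζ(s) = ∑_{k ≥ 1} k⁻ˢ`. -/
noncomputable def zetaVal (s : ℕ) : ℝ := ∑' k : ℕ, (((k : ℝ) + 1) ^ s)⁻¹

/-- `v_m(d) = ∫_{[0,1)} (d - x)^m dμ_{b,E}(x)`. -/
noncomputable def vMoment (b : ℕ) (E : Finset ℕ) (m : ℕ) (d : ℝ) : ℝ :=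
  ∫ x in Set.Ico (0 : ℝ) 1, (d - x) ^ m ∂(kempnerMeasure b E)

lemma dg_diff {x : ℝ} (hx : 0 < x) :
    DifferentiableAt ℝ (fun y => Real.log (Real.Gamma y)) x :=
  (Real.differentiableAt_Gamma (fun m => by
    have : (0:ℝ) ≤ m := m.cast_nonneg
    linarith)).log (Real.Gamma_pos_of_pos hx).ne'

lemma logGamma_add_one {x : ℝ} (hx : 0 < x) :
    Real.log (Real.Gamma (x + 1)) = Real.log (Real.Gamma x) + Real.log x := by
  rw [Real.Gamma_add_one hx.ne', Real.log_mul hx.ne' (Real.Gamma_pos_of_pos hx).ne', add_comm]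

lemma digamma_add_one {x : ℝ} (hx : 0 < x) : digamma (x + 1) = digamma x + 1 / x := by
  unfold digamma
  rw [← deriv_comp_add_const (f := fun y => Real.log (Real.Gamma y)) 1 x]
  have h1 : (fun y => Real.log (Real.Gamma (y + 1))) =ᶠ[nhds x]
      (fun y => Real.log (Real.Gamma y) + Real.log y) := by
    filter_upwards [lt_mem_nhds hx] with y hy using logGamma_add_one hy
  rw [h1.deriv_eq]
  have := ((dg_diff hx).hasDerivAt.add (Real.hasDerivAt_log hx.ne')).deriv
  rw [one_div]
  exact this

lemma digamma_le_log {x : ℝ} (hx : 0 < x) : digamma x ≤ Real.log x := by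
  have h := Real.convexOn_log_Gamma.deriv_le_slope (x := x) (y := x + 1) hx
    (Set.mem_Ioi.2 (by linarith)) (by linarith) (dg_diff hx)
  have h2 : slope (Real.log ∘ Real.Gamma) x (x + 1) = Real.log x := by
    simp [slope_def_field, logGamma_add_one hx]
  rw [h2] at h
  exact h

lemma log_sub_le_digamma {x : ℝ} (hx : 0 < x) : Real.log x - 1 / x ≤ digamma x := by
  have h := Real.convexOn_log_Gamma.slope_le_deriv (x := x) (y := x + 1) hx
    (Set.mem_Ioi.2 (by linarith)) (by linarith) (dg_diff (by linarith))
  have h2 : slope (Real.log ∘ Real.Gamma) x (x + 1) = Real.log x := by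
    simp [slope_def_field, logGamma_add_one hx]
  rw [h2] at h
  have h3 : Real.log x ≤ digamma (x + 1) := h
  rw [digamma_add_one hx] at h3
  linarith

lemma abs_digamma_le {x : ℝ} (hx : 0 ≤ x) (hx1 : x ≤ 1) : |digamma (1 + x)| ≤ 1 := by
  have h1 := digamma_le_log (x := 1 + x) (by linarith)
  have h2 := log_sub_le_digamma (x := 1 + x) (by linarith)
  have h3 : Real.log (1 + x) ≤ (1 + x) - 1 := Real.log_le_sub_one_of_pos (by linarith)
  have h4 : 0 ≤ Real.log (1 + x) := Real.log_nonneg (by linarith)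
  have h5 : 1 / (1 + x) ≤ 1 := by
    rw [div_le_one (by linarith)]; linarith
  rw [abs_le]; constructor <;> linarith

open Filter Topology in
lemma tendsto_digamma_sub_log : Tendsto (fun x => digamma x - Real.log x) atTop (𝓝 0) := by
  have h0 : Tendsto (fun x : ℝ => -(1 / x)) atTop (𝓝 0) := by
    have := (tendsto_inv_atTop_zero (𝕜 := ℝ)).neg
    simpa using this
  refine tendsto_of_tendsto_of_tendsto_of_le_of_le' h0 tendsto_const_nhds ?_ ?_
  · filter_upwards [eventually_gt_atTop 0] with x hx
    have := log_sub_le_digamma hx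
    linarith
  · filter_upwards [eventually_gt_atTop 0] with x hx
    have := digamma_le_log hx
    linarith

noncomputable def gaussDefect (b : ℕ) (y : ℝ) : ℝ :=
  ∑ a ∈ Finset.range b, digamma ((a + y) / b) - b * digamma y + b * Real.log b

lemma gaussDefect_add_one {b : ℕ} (hb : 0 < b) {y : ℝ} (hy : 0 < y) :
    gaussDefect b (y + 1) = gaussDefect b y := by
  have hb' : (0:ℝ) < b := by exact_mod_cast hb
  unfold gaussDefect
  have h1 : ∑ a ∈ Finset.range b, digamma ((a + (y + 1)) / b) + digamma (y / b)
      = ∑ a ∈ Finset.range b, digamma ((a + y) / b) + digamma (y / b + 1) := by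
    have e1 := Finset.sum_range_succ (fun a : ℕ => digamma (((a:ℝ) + y) / b)) b
    have e2 := Finset.sum_range_succ' (fun a : ℕ => digamma (((a:ℝ) + y) / b)) b
    rw [e1] at e2
    have e3 : y / b + 1 = ((b:ℝ) + y) / b := by field_simp; ring
    rw [e3, e2]
    simp only [Nat.cast_zero, zero_add]
    congr 1
    refine Finset.sum_congr rfl fun a _ => ?_
    congr 2
    push_cast; ring
  rw [digamma_add_one (div_pos hy hb')] at h1
  rw [digamma_add_one hy]
  have : 1 / (y / b) = b * (1 / y) := by field_simp
  rw [this] at h1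
  linarith

open Filter Topology in
lemma gaussDefect_tendsto {b : ℕ} (hb : 0 < b) :
    Tendsto (gaussDefect b) atTop (𝓝 0) := by
  have hb' : (0:ℝ) < b := by exact_mod_cast hb
  have hlin : ∀ a : ℕ, Tendsto (fun y : ℝ => ((a:ℝ) + y) / b) atTop atTop := fun a =>
    (tendsto_atTop_add_const_left _ _ tendsto_id).atTop_div_const hb'
  have h1 : ∀ a : ℕ, Tendsto (fun y : ℝ => digamma ((a + y) / b) - Real.log ((a + y)/b)) atTop (𝓝 0) :=
    fun a => tendsto_digamma_sub_log.comp (hlin a)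
  have h2 : ∀ a : ℕ, Tendsto (fun y : ℝ => Real.log ((a + y)/y)) atTop (𝓝 0) := by
    intro a
    have : Tendsto (fun y : ℝ => (a:ℝ) * y⁻¹ + 1) atTop (𝓝 1) := by
      have := ((tendsto_inv_atTop_zero (𝕜 := ℝ)).const_mul (a:ℝ)).add_const 1
      simpa using this
    have h := this.log one_ne_zero
    rw [Real.log_one] at h
    refine h.congr' ?_
    filter_upwards [eventually_gt_atTop 0] with y hy
    congr 1; field_simp
  have h3 : Tendsto (fun y : ℝ => ∑ a ∈ Finset.range b,
      ((digamma ((a + y) / b) - Real.log ((a + y)/b)) + Real.log ((a + y)/y)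
        - (digamma y - Real.log y))) atTop (𝓝 0) := by
    have := tendsto_finsetSum (Finset.range b) (fun a _ =>
      ((h1 a).add (h2 a)).sub tendsto_digamma_sub_log)
    simpa using this
  refine h3.congr' ?_
  filter_upwards [eventually_gt_atTop 0] with y hy
  have : ∀ a ∈ Finset.range b, ((digamma ((a + y) / b) - Real.log ((a + y)/b)) + Real.log ((a + y)/y)
        - (digamma y - Real.log y)) = digamma ((a + y) / b) - digamma y + Real.log b := by
    intro a _
    have ha : (0:ℝ) < a + y := by positivity
    rw [Real.log_div ha.ne' hb'.ne', Real.log_div ha.ne' hy.ne']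
    ring
  rw [Finset.sum_congr rfl this, Finset.sum_add_distrib, Finset.sum_sub_distrib]
  simp [gaussDefect]

open Filter Topology in
lemma gaussDefect_eq_zero {b : ℕ} (hb : 0 < b) {y : ℝ} (hy : 0 < y) : gaussDefect b y = 0 := by
  have h1 : ∀ n : ℕ, gaussDefect b (y + n) = gaussDefect b y := by
    intro n
    induction n with
    | zero => simp
    | succ n ih =>
      rw [← ih, ← gaussDefect_add_one hb (y := y + n) (by positivity)]
      congr 1; push_cast; ring
  have h2 : Tendsto (fun n : ℕ => gaussDefect b (y + n)) atTop (𝓝 0) :=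
    (gaussDefect_tendsto hb).comp
      (tendsto_atTop_add_const_left _ _ tendsto_natCast_atTop_atTop)
  simp only [h1] at h2
  exact tendsto_nhds_unique tendsto_const_nhds h2

/-! ### strings -/

abbrev KT (b : ℕ) (E : Finset ℕ) := {l : List ℕ // ∀ d ∈ l, d < b ∧ d ∉ E}

abbrev KA (b : ℕ) (E : Finset ℕ) : Finset ℕ := Finset.range b \ E

noncomputable def kw {b : ℕ} {E : Finset ℕ} (X : KT b E) : ℝ := ((b:ℝ) ^ X.1.length)⁻¹

noncomputable def kx {b : ℕ} {E : Finset ℕ} (X : KT b E) : ℝ :=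
  ((Nat.ofDigits b X.1 : ℕ) : ℝ) / (b : ℝ) ^ X.1.length

lemma kx_nonneg {b : ℕ} {E : Finset ℕ} (X : KT b E) : 0 ≤ kx X := by
  unfold kx; positivity

lemma kw_nonneg {b : ℕ} {E : Finset ℕ} (X : KT b E) : 0 ≤ kw X := by
  unfold kw; positivity

lemma kx_lt_one {b : ℕ} (hb : 2 ≤ b) {E : Finset ℕ} (X : KT b E) : kx X < 1 := by
  have hb' : (0:ℝ) < b := by exact_mod_cast (by omega : 0 < b)
  unfold kx
  rw [div_lt_one (by positivity)]
  exact_mod_cast Nat.ofDigits_lt_base_pow_length (by omega) (fun d hd => (X.2 d hd).1)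

lemma kw_summable {b : ℕ} (hb : 2 ≤ b) {E : Finset ℕ} (hE : E.Nonempty)
    (hEsub : ∀ d ∈ E, d < b) : Summable (kw : KT b E → ℝ) := by
  have hb' : (0:ℝ) < b := by exact_mod_cast (by omega : 0 < b)
  have hcard : (KA b E).card < b := by
    obtain ⟨e, he⟩ := hE
    calc (KA b E).card < (Finset.range b).card := Finset.card_lt_card (by
          refine Finset.ssubset_iff_subset_ne.2 ⟨Finset.sdiff_subset, fun h => ?_⟩
          have : e ∈ KA b E := by rw [h]; exact Finset.mem_range.2 (hEsub e he)
          exact (Finset.mem_sdiff.1 this).2 he)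
      _ = b := by simp
  have h1 : Summable (fun s : Σ n : ℕ, (Fin n → KA b E) => ((b:ℝ) ^ s.1)⁻¹) := by
    rw [summable_sigma_of_nonneg (fun s => by positivity)]
    refine ⟨fun n => (hasSum_fintype _).summable, ?_⟩
    have : ∀ n : ℕ, ∑' _ : (Fin n → KA b E), ((b:ℝ)^n)⁻¹ = (((KA b E).card : ℝ) / b) ^ n := by
      intro n
      rw [tsum_fintype, Finset.sum_const, Finset.card_univ]
      simp only [Fintype.card_fun, Fintype.card_coe, Fintype.card_fin, nsmul_eq_mul]
      push_cast
      rw [div_pow]; rfl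
    simp only [this]
    refine summable_geometric_of_lt_one (by positivity) ?_
    rw [div_lt_one hb']
    exact_mod_cast hcard
  have h2 : Summable (fun l : List (KA b E) => ((b:ℝ) ^ l.length)⁻¹) := by
    have := (List.equivSigmaTuple (α := KA b E)).summable_iff.2 h1
    exact this
  let j : KT b E → List (KA b E) := fun X =>
    X.1.pmap (fun d hd => ⟨d, by simpa using hd⟩) X.2
  have hj : Function.Injective j := by
    have hinv : ∀ X : KT b E, (j X).map Subtype.val = X.1 := by
      intro X
      simp [j]
    intro X Y hXY
    apply Subtype.ext
    rw [← hinv X, ← hinv Y, hXY]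
  have h3 := h2.comp_injective hj
  refine h3.congr fun X => ?_
  simp [j, kw]

lemma kw_mul_summable {b : ℕ} (hb : 2 ≤ b) {E : Finset ℕ} (hE : E.Nonempty)
    (hEsub : ∀ d ∈ E, d < b) (f : ℝ → ℝ) (C : ℝ) (hf : ∀ x, 0 ≤ x → x < 1 → |f x| ≤ C) :
    Summable (fun X : KT b E => kw X * f (kx X)) := by
  refine Summable.of_norm_bounded ((kw_summable hb hE hEsub).mul_right C) fun X => ?_
  rw [norm_mul, Real.norm_of_nonneg (kw_nonneg X)]
  exact mul_le_mul_of_nonneg_left (hf _ (kx_nonneg X) (kx_lt_one hb X)) (kw_nonneg X)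

def ksnoc {b : ℕ} {E : Finset ℕ} (p : KT b E × KA b E) : KT b E :=
  ⟨p.1.1 ++ [p.2.1], by
    intro d hd
    rcases List.mem_append.1 hd with h | h
    · exact p.1.2 d h
    · rw [List.mem_singleton.1 h]
      have := Finset.mem_sdiff.1 p.2.2
      exact ⟨Finset.mem_range.1 this.1, this.2⟩⟩

lemma ksnoc_injective {b : ℕ} {E : Finset ℕ} :
    Function.Injective (ksnoc : KT b E × KA b E → KT b E) := by
  rintro ⟨⟨l, hl⟩, ⟨a, ha⟩⟩ ⟨⟨l', hl'⟩, ⟨a', ha'⟩⟩ h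
  have h' : l ++ [a] = l' ++ [a'] := congrArg Subtype.val h
  simp only [List.append_singleton_inj] at h'
  obtain ⟨rfl, rfl⟩ := h'
  rfl

lemma ksnoc_range {b : ℕ} {E : Finset ℕ} (X : KT b E) (hX : X.1 ≠ []) :
    ∃ p, ksnoc p = X := by
  have hlast := X.2 _ (List.getLast_mem hX)
  refine ⟨(⟨X.1.dropLast, fun d hd => X.2 d (List.dropLast_subset _ hd)⟩,
    ⟨X.1.getLast hX, by simpa using hlast⟩), ?_⟩
  apply Subtype.ext
  exact List.dropLast_append_getLast hX

lemma kw_ksnoc {b : ℕ} {E : Finset ℕ} (p : KT b E × KA b E) :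
    kw (ksnoc p) = kw p.1 * (1 / b) := by
  simp [kw, ksnoc, pow_succ, mul_comm]

lemma kx_ksnoc {b : ℕ} (hb : 2 ≤ b) {E : Finset ℕ} (p : KT b E × KA b E) :
    kx (ksnoc p) = ((p.2.1 : ℝ) + kx p.1) / b := by
  have hb' : (0:ℝ) < b := by exact_mod_cast (by omega : 0 < b)
  simp only [kx, ksnoc, Nat.ofDigits_append, Nat.ofDigits_singleton, List.length_append,
    List.length_singleton, pow_succ]
  push_cast
  field_simp
  ring

lemma kw_prod_summable {b : ℕ} (hb : 2 ≤ b) {E : Finset ℕ} (hE : E.Nonempty)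
    (hEsub : ∀ d ∈ E, d < b) : Summable (fun p : KT b E × KA b E => kw p.1) := by
  have h := ((kw_summable hb hE hEsub).comp_injective ksnoc_injective).mul_right (b:ℝ)
  have hb' : (0:ℝ) < b := by exact_mod_cast (by omega : 0 < b)
  refine h.congr fun p => ?_
  simp only [Function.comp, kw_ksnoc]
  field_simp

lemma k_recursion {b : ℕ} (hb : 2 ≤ b) {E : Finset ℕ} (hE : E.Nonempty)
    (hEsub : ∀ d ∈ E, d < b) (f : ℝ → ℝ) (C : ℝ) (hf : ∀ x, 0 ≤ x → x < 1 → |f x| ≤ C) :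
    ∑' X : KT b E, kw X * f (kx X) =
      f 0 + ∑' X : KT b E, kw X * ((1 / b) * ∑ a ∈ KA b E, f ((a + kx X) / b)) := by
  classical
  have hs := kw_mul_summable hb hE hEsub f C hf
  let N : KT b E := ⟨[], by simp⟩
  rw [hs.tsum_eq_add_tsum_ite N]
  congr 1
  · simp [kw, kx, N]
  · rw [← ksnoc_injective.tsum_eq]
    · have e : ∀ p : KT b E × KA b E, (if ksnoc p = N then 0 else kw (ksnoc p) * f (kx (ksnoc p)))
          = kw p.1 * (1 / b) * f ((p.2.1 + kx p.1) / b) := by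
        intro p
        rw [if_neg, kw_ksnoc, kx_ksnoc hb]
        intro h
        have := congrArg Subtype.val h
        simp [ksnoc, N] at this
      simp only [e]
      have hs2 : Summable (fun p : KT b E × KA b E =>
          kw p.1 * (1 / b) * f ((p.2.1 + kx p.1) / b)) := by
        have := hs.comp_injective ksnoc_injective
        refine this.congr fun p => ?_
        simp only [Function.comp, kw_ksnoc, kx_ksnoc hb]
      rw [hs2.tsum_prod]
      refine tsum_congr fun X => ?_
      rw [tsum_fintype, ← Finset.sum_coe_sort (KA b E), Finset.mul_sum, Finset.mul_sum]
      refine Finset.sum_congr rfl fun a _ => ?_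
      ring
    · intro X hX
      apply ksnoc_range
      intro h
      apply hX
      have : X = N := Subtype.ext h
      simp [this]

noncomputable def kkap (b : ℕ) (E : Finset ℕ) (x : ℝ) : ℝ :=
  ∑ a ∈ KA b E, if a = 0 then 0 else 1 / ((a:ℝ) + x)

lemma kkap_bound (b : ℕ) (E : Finset ℕ) (x : ℝ) (hx : 0 ≤ x) : |kkap b E x| ≤ (KA b E).card := by
  unfold kkap
  refine (Finset.abs_sum_le_sum_abs _ _).trans ?_
  have : ∀ a ∈ KA b E, |if a = 0 then 0 else 1 / ((a:ℝ) + x)| ≤ 1 := by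
    intro a _
    split_ifs with h
    · simp
    · have : (1:ℝ) ≤ a := by exact_mod_cast Nat.one_le_iff_ne_zero.2 h
      rw [abs_of_nonneg (by positivity), div_le_one (by linarith)]
      linarith
  refine (Finset.sum_le_sum this).trans ?_
  simp

lemma kempnerSum_eq {b : ℕ} (hb : 2 ≤ b) {E : Finset ℕ} (hE : E.Nonempty)
    (hEsub : ∀ d ∈ E, d < b) :
    kempnerSum b E = ∑' X : KT b E, kw X * kkap b E (kx X) := by
  classical
  have hb' : (0:ℝ) < b := by exact_mod_cast (by omega : 0 < b)
  let B : Finset ℕ := (KA b E).filter (fun a => a ≠ 0)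
  have hB : ∀ a : B, a.1 < b ∧ a.1 ∉ E ∧ a.1 ≠ 0 := fun a => by
    have := a.2
    simp only [B, KA, Finset.mem_filter, Finset.mem_sdiff, Finset.mem_range] at this
    tauto
  let g : KT b E × B → ℕ := fun p => Nat.ofDigits b (p.1.1 ++ [p.2.1])
  have hdig : ∀ p, Nat.digits b (g p) = p.1.1 ++ [p.2.1] := by
    intro p
    apply Nat.digits_ofDigits b (by omega)
    · intro d hd
      rcases List.mem_append.1 hd with h | h
      · exact (p.1.2 d h).1
      · rw [List.mem_singleton.1 h]; exact (hB p.2).1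
    · intro h
      simpa using (hB p.2).2.2
  have hg : Function.Injective g := by
    intro p q h
    have h' : p.1.1 ++ [p.2.1] = q.1.1 ++ [q.2.1] := by rw [← hdig, ← hdig, h]
    rw [List.append_singleton_inj] at h'
    exact Prod.ext (Subtype.ext h'.1) (Subtype.ext h'.2)
  unfold kempnerSum
  rw [← hg.tsum_eq]
  · have e : ∀ p, (if g p ≠ 0 ∧ ∀ d ∈ Nat.digits b (g p), d ∉ E then ((g p : ℕ) : ℝ)⁻¹ else 0)
        = kw p.1 * (1 / ((p.2.1 : ℝ) + kx p.1)) := by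
      intro p
      have hpos : (0:ℝ) < p.2.1 := by exact_mod_cast Nat.pos_of_ne_zero (hB p.2).2.2
      rw [if_pos]
      · simp only [g, kw, kx, Nat.ofDigits_append, Nat.ofDigits_singleton]
        push_cast
        rw [one_div, ← mul_inv]
        congr 1
        field_simp
        ring
      · refine ⟨fun h => ?_, fun d hd => ?_⟩
        · have := hdig p
          rw [h] at this
          simp at this
        · rw [hdig] at hd
          rcases List.mem_append.1 hd with h | h
          · exact (p.1.2 d h).2
          · rw [List.mem_singleton.1 h]; exact (hB p.2).2.1
    simp only [e]
    have hs : Summable (fun p : KT b E × B => kw p.1 * (1 / ((p.2.1 : ℝ) + kx p.1))) := by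
      have h0 : Summable (fun p : KT b E × B => kw p.1) :=
        (kw_prod_summable hb hE hEsub).comp_injective
          (i := fun p : KT b E × B => (p.1, (⟨p.2.1, (Finset.mem_filter.1 p.2.2).1⟩ : KA b E)))
          (by
            rintro ⟨X, a⟩ ⟨Y, c⟩ h
            simp only [Prod.mk.injEq, Subtype.mk.injEq] at h
            exact Prod.ext h.1 (Subtype.ext h.2))
      refine Summable.of_norm_bounded h0 fun p => ?_
      have : (1:ℝ) ≤ p.2.1 := by exact_mod_cast Nat.one_le_iff_ne_zero.2 (hB p.2).2.2
      have hx := kx_nonneg p.1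
      rw [norm_mul, Real.norm_of_nonneg (kw_nonneg p.1), Real.norm_of_nonneg (by positivity)]
      refine mul_le_of_le_one_right (kw_nonneg _) ?_
      rw [div_le_one (by linarith)]
      linarith
    rw [hs.tsum_prod]
    refine tsum_congr fun X => ?_
    rw [tsum_fintype]
    dsimp only
    rw [← Finset.mul_sum]
    congr 1
    rw [Finset.sum_coe_sort B (fun a => 1 / ((a:ℝ) + kx X))]
    simp only [B, kkap, Finset.sum_filter]
    refine Finset.sum_congr rfl fun a _ => ?_
    by_cases h : a = 0 <;> simp [h]
  · intro n hn
    have hn' : n ≠ 0 ∧ ∀ d ∈ Nat.digits b n, d ∉ E := by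
      by_contra h
      exact hn (if_neg h)
    have hne : Nat.digits b n ≠ [] := Nat.digits_ne_nil_iff_ne_zero.2 hn'.1
    have hmem : ∀ d ∈ Nat.digits b n, d < b ∧ d ∉ E := fun d hd =>
      ⟨Nat.digits_lt_base (by omega) hd, hn'.2 d hd⟩
    have hlast := hmem _ (List.getLast_mem hne)
    have hl0 := Nat.getLast_digit_ne_zero b hn'.1
    refine ⟨(⟨(Nat.digits b n).dropLast, fun d hd => hmem d (List.dropLast_subset _ hd)⟩,
      ⟨(Nat.digits b n).getLast hne, by
        simp only [B, KA, Finset.mem_filter, Finset.mem_sdiff, Finset.mem_range]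
        exact ⟨hlast, hl0⟩⟩), ?_⟩
    simp only [g]
    rw [List.dropLast_append_getLast, Nat.ofDigits_digits]

lemma integral_kempner {b : ℕ} (hb : 2 ≤ b) (E : Finset ℕ) (f : ℝ → ℝ) :
    ∫ x in Set.Ico (0 : ℝ) 1, f x ∂(kempnerMeasure b E) = ∑' X : KT b E, kw X * f (kx X) := by
  have h : (kempnerMeasure b E).restrict (Set.Ico (0:ℝ) 1) = kempnerMeasure b E := by
    apply Measure.restrict_eq_self_of_ae_mem
    unfold kempnerMeasure
    rw [Measure.ae_sum_iff]
    intro X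
    apply Measure.ae_smul_measure
    refine (ae_dirac_iff (p := fun x => x ∈ Set.Ico (0:ℝ) 1) measurableSet_Ico).2 ?_
    exact ⟨kx_nonneg X, kx_lt_one hb X⟩
  rw [h]
  unfold kempnerMeasure
  rw [integral_sum_dirac]
  · refine tsum_congr fun X => ?_
    simp [kw, kx]
  · intro X
    have : (b : ℝ≥0∞) ≠ 0 := by
      have : b ≠ 0 := by omega
      exact_mod_cast this
    simp [this]

lemma integrand_eq {b : ℕ} (hb : 2 ≤ b) {E : Finset ℕ}
    (hEsub : ∀ d ∈ E, d < b) {x : ℝ} (hx : 0 ≤ x) :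
    (1 / (b : ℝ)) * ∑ d ∈ (Eone b E).image (fun a => b - a),
          (digamma 1 - digamma (1 - ((d : ℝ) - x) / b)) =
      ((E.card : ℝ) / b * digamma 1 + Real.log b) - digamma (1 + x) +
        (1 / b) * ∑ a ∈ KA b E, digamma (1 + (a + x) / b) - kkap b E x := by
  have hb' : (0:ℝ) < b := by exact_mod_cast (by omega : 0 < b)
  let φ : ℕ → ℝ := fun a => if a = 0 then digamma (1 + x / b) else digamma ((a + x) / b)
  have h1 : ∑ d ∈ (Eone b E).image (fun a => b - a),
          (digamma 1 - digamma (1 - ((d : ℝ) - x) / b)) = ∑ a ∈ E, (digamma 1 - φ a) := by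
    have hle : ∀ a ∈ Eone b E, a ≤ b := by
      intro a ha
      unfold Eone at ha
      split_ifs at ha
      · rcases Finset.mem_insert.1 ha with rfl | h
        · exact le_rfl
        · exact (hEsub a (Finset.mem_of_mem_erase h)).le
      · exact (hEsub a ha).le
    rw [Finset.sum_image (fun a ha c hc h => by
      have := hle a ha
      have := hle c hc
      omega)]
    have h2 : ∀ a ∈ Eone b E, (digamma 1 - digamma (1 - (((b - a : ℕ) : ℝ) - x) / b))
        = digamma 1 - digamma ((a + x) / b) := by
      intro a ha
      rw [Nat.cast_sub (hle a ha)]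
      congr 2
      field_simp
      ring
    rw [Finset.sum_congr rfl h2]
    unfold Eone
    split_ifs with h0
    · rw [Finset.sum_insert (fun h => by
        have := hEsub b (Finset.mem_of_mem_erase h); omega), ← Finset.add_sum_erase E _ h0]
      congr 1
      · simp only [φ, if_true]
        congr 2
        field_simp
      · refine Finset.sum_congr rfl fun a ha => ?_
        simp [φ, Finset.ne_of_mem_erase ha]
    · refine Finset.sum_congr rfl fun a ha => ?_
      have : a ≠ 0 := fun h => h0 (h ▸ ha)
      simp [φ, this]
  have h2 : ∑ a ∈ Finset.range b, φ a = b * digamma (1 + x) - b * Real.log b := by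
    have hG := gaussDefect_eq_zero (b := b) (by omega) (y := 1 + x) (by linarith)
    unfold gaussDefect at hG
    have : ∑ a ∈ Finset.range b, φ a = ∑ a ∈ Finset.range b, digamma ((a + (1 + x)) / b) := by
      obtain ⟨c, rfl⟩ : ∃ c, b = c + 1 := ⟨b - 1, by omega⟩
      rw [Finset.sum_range_succ', Finset.sum_range_succ]
      congr 1
      · refine Finset.sum_congr rfl fun a _ => ?_
        simp only [φ, Nat.succ_ne_zero, if_false]
        congr 2
        push_cast; ring
      · simp only [φ, if_true]
        congr 1
        push_cast at hb' ⊢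
        field_simp
        ring
    rw [this]; linarith
  have h3 : ∑ a ∈ KA b E, φ a + ∑ a ∈ E, φ a = ∑ a ∈ Finset.range b, φ a :=
    Finset.sum_sdiff (fun a ha => Finset.mem_range.2 (hEsub a ha))
  have h4 : ∑ a ∈ KA b E, φ a = ∑ a ∈ KA b E, digamma (1 + (a + x) / b) - b * kkap b E x := by
    unfold kkap
    rw [Finset.mul_sum, ← Finset.sum_sub_distrib]
    refine Finset.sum_congr rfl fun a _ => ?_
    by_cases ha : a = 0
    · simp [φ, ha]
    · have hpos : (0:ℝ) < a := by exact_mod_cast Nat.pos_of_ne_zero ha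
      simp only [φ, ha, if_false]
      rw [add_comm 1, digamma_add_one (by positivity)]
      field_simp
      ring
  rw [h1, Finset.sum_sub_distrib, Finset.sum_const, nsmul_eq_mul]
  have h5 : ∑ a ∈ E, φ a = b * digamma (1 + x) - b * Real.log b
      - (∑ a ∈ KA b E, digamma (1 + (a + x) / b) - b * kkap b E x) := by linarith
  rw [h5]
  field_simp
  ring

theorem kempner_digamma_formula_reflected (b : ℕ) (hb : 2 ≤ b) (E : Finset ℕ)
    (hE : E.Nonempty) (hEsub : ∀ d ∈ E, d < b) :
    kempnerSum b E = ((b : ℝ) / E.card) * Real.log b -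
      ∫ x in Set.Ico (0 : ℝ) 1,
        (1 / (b : ℝ)) * ∑ d ∈ (Eone b E).image (fun a => b - a),
          (digamma 1 - digamma (1 - ((d : ℝ) - x) / b))
        ∂(kempnerMeasure b E) := by
  have hb' : (0:ℝ) < b := by exact_mod_cast (by omega : 0 < b)
  have hc : (0:ℝ) < E.card := by exact_mod_cast hE.card_pos
  rw [integral_kempner hb, kempnerSum_eq hb hE hEsub]
  have e : ∀ X : KT b E, kw X * ((1 / (b : ℝ)) * ∑ d ∈ (Eone b E).image (fun a => b - a),
          (digamma 1 - digamma (1 - ((d : ℝ) - kx X) / b))) =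
      kw X * ((E.card : ℝ) / b * digamma 1 + Real.log b) - kw X * digamma (1 + kx X) +
        kw X * ((1 / b) * ∑ a ∈ KA b E, digamma (1 + (a + kx X) / b)) - kw X * kkap b E (kx X) := by
    intro X
    rw [integrand_eq hb hEsub (kx_nonneg X)]
    ring
  simp only [e]
  have hg : ∀ x : ℝ, 0 ≤ x → x < 1 → |digamma (1 + x)| ≤ 1 := fun x h h' => abs_digamma_le h h'.le
  have s1 := (kw_summable hb hE hEsub).mul_right ((E.card : ℝ) / b * digamma 1 + Real.log b)
  have s2 := kw_mul_summable hb hE hEsub (fun x => digamma (1 + x)) 1 hg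
  have s3 := kw_mul_summable hb hE hEsub
    (fun x => (1 / (b:ℝ)) * ∑ a ∈ KA b E, digamma (1 + (a + x) / b))
    ((1 / (b:ℝ)) * (KA b E).card) (by
      intro x hx hx1
      rw [abs_mul, abs_of_pos (by positivity : (0:ℝ) < 1 / b)]
      refine mul_le_mul_of_nonneg_left ?_ (by positivity)
      refine (Finset.abs_sum_le_sum_abs _ _).trans ?_
      have : ∀ a ∈ KA b E, |digamma (1 + ((a:ℝ) + x) / b)| ≤ 1 := by
        intro a ha
        have hab : a < b := by
          simp only [KA, Finset.mem_sdiff, Finset.mem_range] at ha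
          exact ha.1
        have hab' : (a:ℝ) + 1 ≤ b := by exact_mod_cast hab
        apply abs_digamma_le (by positivity)
        rw [div_le_one hb']
        linarith
      refine (Finset.sum_le_sum this).trans ?_
      simp)
  have s4 := kw_mul_summable hb hE hEsub (kkap b E) (KA b E).card
    (fun x hx _ => kkap_bound b E x hx)
  rw [((s1.sub s2).add s3).tsum_sub s4, (s1.sub s2).tsum_add s3, s1.tsum_sub s2, tsum_mul_right]
  have hr := k_recursion hb hE hEsub (fun x => digamma (1 + x)) 1 hg
  have hM := k_recursion hb hE hEsub (fun _ => 1) 1 (by simp)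
  have hcard : ((KA b E).card : ℝ) = b - E.card := by
    have : (KA b E).card + E.card = b := by
      have := Finset.card_sdiff_add_card_eq_card
        (fun a ha => Finset.mem_range.2 (hEsub a ha) : E ⊆ Finset.range b)
      simpa using this
    have h : ((KA b E).card : ℝ) + E.card = b := by exact_mod_cast this
    linarith
  simp only [mul_one, Finset.sum_const, nsmul_eq_mul, tsum_mul_right, hcard] at hM
  have hM' : ∑' X : KT b E, kw X = b / E.card := by
    field_simp at hM ⊢
    linarith
  rw [hM', hr]
  simp only [add_zero]
  generalize ∑' X : KT b E, kw X * kkap b E (kx X) = K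
  generalize (∑' X : KT b E, kw X * ((1 / (b:ℝ)) * ∑ a ∈ KA b E, digamma (1 + (a + kx X) / b))) = S
  generalize digamma 1 = D
  generalize Real.log b = L
  have hbb : (b:ℝ) / E.card * ((E.card : ℝ) / b) = 1 := by
    rw [div_mul_div_comm, mul_comm, div_self (mul_pos hc hb').ne']
  linear_combination D * hbb
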